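/- For 3 ≤ g < n, among all unicyclic graphs on n vertices with girth g, the pineapple graph U^p_{n,g} uniquely maximizes the core index, and F(U^p_{n,g}) = n + g^2 − g + 1 + (2^{n−g} − 1)(2g + C(g−1, 2)). -/

import Mathlib

open SimpleGraph

/-- The core index of a graph `G`: the number of connected subgraphs of `G`. -/
noncomputable def coreIndex {V : Type*} (G : SimpleGraph V) : ℕ :=
  Nat.card {H : G.Subgraph // H.Connected}

/-- The pineapple graph `U^p_{n,g}`: the cycle `C_g` together with `n - g` pendant
vertices all attached to the cycle vertex `0`. -/
def pineapple (n g : ℕ) : SimpleGraph (Fin g ⊕ Fin (n - g)) :=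
  SimpleGraph.fromRel (fun x y =>
    (∃ a b : Fin g, x = Sum.inl a ∧ y = Sum.inl b ∧ (cycleGraph g).Adj a b) ∨
    (∃ (a : Fin g) (i : Fin (n - g)), x = Sum.inl a ∧ (a : ℕ) = 0 ∧ y = Sum.inr i))

/-!
Attach a new vertex `v` to a vertex `w` of a connected set of vertices. Deleting `v` matches the
connected subgraphs through `v`, other than `{v}` itself, with the connected subgraphs through `w`.
Hence the number of connected subgraphs through a fixed vertex `u` at most doubles with each new
leaf, and it doubles exactly when the leaf is attached at `u`; so the total is largest precisely
when all leaves hang on one vertex of the initial graph.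

Each vertex added to a connected set brings at least one edge. A connected graph with as many edges
as vertices therefore leaves no slack beyond a shortest cycle: the cycle is induced, and every
further vertex is attached as a leaf. On the cycle `C_g` the connected subgraphs are the `g ^ 2`
arcs and the cycle itself, and `C(g + 1, 2) + 1` of them pass through a given vertex.
-/

section ConnectedSubgraphs

variable {V W : Type*} {G : SimpleGraph V}

theorem subgraph_connected_iff_forall_closed {H : G.Subgraph} {a : V} (ha : a ∈ H.verts) :
    H.Connected ↔
      ∀ A : Set V, a ∈ A → (∀ x ∈ A, ∀ y, H.Adj x y → y ∈ A) → H.verts ⊆ A := by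
  constructor
  · intro hH A haA hA b hb
    have mem_of_walk {x y : H.verts} (p : H.coe.Walk x y) : (x : V) ∈ A → (y : V) ∈ A := by
      induction p with
      | nil => exact id
      | cons hxy _ ih => exact fun hx => ih (hA _ hx _ hxy)
    obtain ⟨p⟩ := hH.preconnected.coe ⟨a, ha⟩ ⟨b, hb⟩
    exact mem_of_walk p haA
  · intro h
    rw [Subgraph.connected_iff', connected_iff_exists_forall_reachable]
    refine ⟨⟨a, ha⟩, fun ⟨b, hb⟩ => ?_⟩
    have reachable_of_mem : H.verts ⊆ {x | ∃ hx : x ∈ H.verts, H.coe.Reachable ⟨a, ha⟩ ⟨x, hx⟩} :=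
      h _ ⟨ha, .rfl⟩ fun x ⟨hx, hax⟩ y hxy =>
        ⟨hxy.snd_mem, hax.trans (Adj.reachable (G := H.coe) hxy)⟩
    exact (reachable_of_mem hb).2

theorem subgraph_eq_of_le_of_forall_adj {H K : G.Subgraph} (hH : H.Connected) (hKH : K ≤ H)
    (hK : K.verts.Nonempty) (hadj : ∀ x ∈ K.verts, ∀ y, H.Adj x y → K.Adj x y) : K = H := by
  obtain ⟨a, ha⟩ := hK
  have hverts : H.verts ⊆ K.verts :=
    (subgraph_connected_iff_forall_closed (hKH.1 ha)).1 hH _ ha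
      fun x hx y hxy => (hadj x hx y hxy).snd_mem
  exact le_antisymm hKH ⟨hverts, fun x y hxy => hadj x (hverts hxy.fst_mem) y hxy⟩

theorem subgraph_map_connected {G' : SimpleGraph W} (f : G →g G') {H : G.Subgraph}
    (hH : H.Connected) : (H.map f).Connected := by
  obtain ⟨a, ha⟩ := hH.nonempty
  rw [subgraph_connected_iff_forall_closed (Set.mem_image_of_mem f ha)]
  intro A haA hA
  exact Set.image_subset_iff.2 <| (subgraph_connected_iff_forall_closed ha).1 hH (f ⁻¹' A) haA
    fun x hx y hxy => hA _ hx _ ⟨x, y, hxy, rfl, rfl⟩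

theorem subgraph_comap_map {G' : SimpleGraph W} (f : G ↪g G') (H : G.Subgraph) :
    (H.map f.toHom).comap f.toHom = H := by
  ext x y
  · simp
  · simpa [Relation.Map] using H.adj_sub

theorem subgraph_map_comap {G' : SimpleGraph W} (f : G ↪g G') {H : G'.Subgraph}
    (hH : H.verts ⊆ Set.range f) : (H.comap f.toHom).map f.toHom = H := by
  ext x y
  · constructor
    · rintro ⟨y, hy, rfl⟩
      exact hy
    · intro hx
      obtain ⟨y, rfl⟩ := hH hx
      exact ⟨y, hx, rfl⟩
  · constructor
    · rintro ⟨a, b, hab, rfl, rfl⟩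
      exact hab.2
    · intro hxy
      obtain ⟨a, rfl⟩ := hH hxy.fst_mem
      obtain ⟨b, rfl⟩ := hH hxy.snd_mem
      exact ⟨a, b, ⟨f.map_adj_iff.1 hxy.adj_sub, hxy⟩, rfl, rfl⟩

theorem subgraph_comap_connected {G' : SimpleGraph W} (f : G ↪g G') {H : G'.Subgraph}
    (hH : H.Connected) (hf : H.verts ⊆ Set.range f) : (H.comap f.toHom).Connected := by
  obtain ⟨_, ha⟩ := hH.nonempty
  obtain ⟨a, rfl⟩ := hf ha
  rw [subgraph_connected_iff_forall_closed (show a ∈ (H.comap f.toHom).verts from ha)]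
  intro A haA hA x hx
  have hmem := (subgraph_connected_iff_forall_closed ha).1 hH (f '' A) ⟨a, haA, rfl⟩ ?_ hx
  · exact f.injective.mem_set_image.1 hmem
  · rintro _ ⟨x, hx, rfl⟩ z hxz
    obtain ⟨y, rfl⟩ := hf hxz.snd_mem
    exact ⟨y, hA x hx y ⟨f.map_adj_iff.1 hxz.adj_sub, hxz⟩, rfl⟩

/-- The connected subgraphs of `G` whose vertex set lies between `T` and `S`. Its cardinality for
`T = ∅`, `S = univ` is the core index; `T = {u}` counts the connected subgraphs through `u`. -/
def connectedBetween (G : SimpleGraph V) (T S : Set V) : Set G.Subgraph :=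
  {H | H.Connected ∧ T ⊆ H.verts ∧ H.verts ⊆ S}

theorem coreIndex_eq_ncard_connectedBetween (G : SimpleGraph V) :
    coreIndex G = (connectedBetween G ∅ Set.univ).ncard := by
  simp only [connectedBetween, Set.empty_subset, Set.subset_univ, and_true]
  rfl

theorem connectedBetween_anti_left {T T' : Set V} (h : T ⊆ T') (S : Set V) :
    connectedBetween G T' S ⊆ connectedBetween G T S :=
  fun _ hH => ⟨hH.1, h.trans hH.2.1, hH.2.2⟩

theorem singletonSubgraph_mem_connectedBetween {u : V} {S : Set V} (hu : u ∈ S) :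
    G.singletonSubgraph u ∈ connectedBetween G {u} S :=
  ⟨Subgraph.singletonSubgraph_connected, by simp, by simpa using hu⟩

theorem bijOn_map_connectedBetween {G' : SimpleGraph W} (f : G ↪g G') (T S : Set V) :
    Set.BijOn (Subgraph.map f.toHom) (connectedBetween G T S)
      (connectedBetween G' (f '' T) (f '' S)) := by
  refine Set.InvOn.bijOn (f' := Subgraph.comap f.toHom)
    ⟨fun H _ => subgraph_comap_map f H,
      fun H hH => subgraph_map_comap f (hH.2.2.trans (Set.image_subset_range f S))⟩ ?_ ?_
  · exact fun H ⟨hH, hT, hS⟩ =>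
      ⟨subgraph_map_connected _ hH, Set.image_mono hT, Set.image_mono hS⟩
  · exact fun H ⟨hH, hT, hS⟩ =>
      ⟨subgraph_comap_connected f hH (hS.trans (Set.image_subset_range f S)),
        Set.image_subset_iff.1 hT,
        fun x hx => f.injective.mem_set_image.1 (hS hx)⟩

theorem ncard_connectedBetween_image {G' : SimpleGraph W} (f : G ↪g G') (T S : Set V) :
    (connectedBetween G' (f '' T) (f '' S)).ncard = (connectedBetween G T S).ncard :=
  (bijOn_map_connectedBetween f T S).ncard_eq.symm

theorem coreIndex_congr {G' : SimpleGraph W} (f : G ≃g G') : coreIndex G = coreIndex G' := by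
  rw [coreIndex_eq_ncard_connectedBetween, coreIndex_eq_ncard_connectedBetween,
    ← ncard_connectedBetween_image f.toEmbedding, Set.image_empty, Set.image_univ,
    show Set.range f.toEmbedding = Set.univ from f.surjective.range_eq]

end ConnectedSubgraphs

section Pendant

variable {V : Type*} {G : SimpleGraph V} {S T : Set V} {v w : V}

/-- `v` is a pendant vertex attached to `S` at `w`: it lies outside `S`, and `w` is its only
neighbour in `S`. -/
structure IsPendantAt (G : SimpleGraph V) (S : Set V) (v w : V) : Prop where
  notMem : v ∉ S
  neighborSet_inter : G.neighborSet v ∩ S = {w}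

namespace IsPendantAt

theorem adj_iff (h : IsPendantAt G S v w) {x : V} (hx : x ∈ S) : G.Adj v x ↔ x = w := by
  simpa [hx] using Set.ext_iff.1 h.neighborSet_inter x

theorem mem (h : IsPendantAt G S v w) : w ∈ S :=
  (h.neighborSet_inter.ge rfl).2

theorem adj (h : IsPendantAt G S v w) : G.Adj v w :=
  (h.neighborSet_inter.ge rfl).1

theorem eq_of_subgraph_adj (h : IsPendantAt G S v w) {K : G.Subgraph}
    (hK : K.verts ⊆ insert v S) {x : V} (hx : K.Adj v x) : x = w := by
  rcases hK hx.snd_mem with rfl | hxS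
  · exact absurd rfl hx.ne
  · exact (h.adj_iff hxS).1 hx.adj_sub

theorem subgraph_adj (h : IsPendantAt G S v w) {K : G.Subgraph} (hK : K.Connected)
    (hKS : K.verts ⊆ insert v S) (hv : v ∈ K.verts) (hne : K ≠ G.singletonSubgraph v) :
    K.Adj v w := by
  by_contra hvw
  refine hne ((eq_singletonSubgraph_iff_verts_eq K).2 (Set.Subset.antisymm ?_ (by simpa)))
  refine (subgraph_connected_iff_forall_closed hv).1 hK {v} rfl ?_
  rintro _ rfl y hy
  exact absurd (h.eq_of_subgraph_adj hKS hy ▸ hy) hvw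

theorem deleteVerts_connected (h : IsPendantAt G S v w) {K : G.Subgraph} (hK : K.Connected)
    (hKS : K.verts ⊆ insert v S) (hvw : K.Adj v w) : (K.deleteVerts {v}).Connected := by
  rw [subgraph_connected_iff_forall_closed (a := w) (by simpa using ⟨hvw.snd_mem, hvw.ne.symm⟩)]
  intro A hwA hA
  have hverts : K.verts ⊆ insert v A := by
    refine (subgraph_connected_iff_forall_closed hvw.snd_mem).1 hK _ (.inr hwA) ?_
    intro x hx y hxy
    by_cases hy : y = v
    · exact .inl hy
    by_cases hxv : x = v
    · subst hxv
      exact .inr (h.eq_of_subgraph_adj hKS hxy ▸ hwA)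
    · exact .inr (hA x (hx.resolve_left hxv) y (by simp [hxy, hxv, hy, hxy.fst_mem, hxy.snd_mem]))
  exact fun x hx => (hverts hx.1).resolve_left hx.2

theorem deleteVerts_sup (h : IsPendantAt G S v w) {K : G.Subgraph}
    (hKS : K.verts ⊆ insert v S) (hvw : K.Adj v w) :
    K.deleteVerts {v} ⊔ G.subgraphOfAdj h.adj = K := by
  refine le_antisymm (sup_le Subgraph.deleteVerts_le (subgraphOfAdj_le_of_adj K hvw)) ⟨?_, ?_⟩
  · intro x hx
    by_cases hxv : x = v
    · exact .inr (.inl hxv)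
    · exact .inl ⟨hx, hxv⟩
  · intro x y hxy
    by_cases hxv : x = v
    · subst hxv
      obtain rfl := h.eq_of_subgraph_adj hKS hxy
      exact .inr rfl
    by_cases hyv : y = v
    · subst hyv
      obtain rfl := h.eq_of_subgraph_adj hKS hxy.symm
      exact .inr Sym2.eq_swap
    · exact .inl (by simp [hxy, hxv, hyv, hxy.fst_mem, hxy.snd_mem])

theorem sup_deleteVerts (h : IsPendantAt G S v w) {H : G.Subgraph} (hHS : H.verts ⊆ S)
    (hw : w ∈ H.verts) : (H ⊔ G.subgraphOfAdj h.adj).deleteVerts {v} = H := by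
  have hv : v ∉ H.verts := fun hv => h.notMem (hHS hv)
  refine le_antisymm (And.intro ?_ ?_) (And.intro (fun x hx => ⟨.inl hx, fun e => hv (e ▸ hx)⟩) ?_)
  · rintro x ⟨hx | rfl | rfl, hxv⟩
    exacts [hx, absurd rfl hxv, hw]
  · simp only [Subgraph.deleteVerts_adj, Set.mem_singleton_iff]
    rintro x y ⟨-, hxv, -, hyv, hxy | hxy⟩
    · exact hxy
    · rcases Sym2.eq_iff.1 hxy with ⟨rfl, -⟩ | ⟨rfl, -⟩
      exacts [absurd rfl hxv, absurd rfl hyv]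
  · intro x y hxy
    exact Subgraph.deleteVerts_adj.2 ⟨.inl hxy.fst_mem, fun e => hv (e ▸ hxy.fst_mem),
      .inl hxy.snd_mem, fun e => hv (e ▸ hxy.snd_mem), .inl hxy⟩

theorem bijOn_sup (h : IsPendantAt G S v w) (hT : T ⊆ S) :
    Set.BijOn (· ⊔ G.subgraphOfAdj h.adj) (connectedBetween G (insert w T) S)
      (connectedBetween G (insert v T) (insert v S) \ {G.singletonSubgraph v}) := by
  refine Set.InvOn.bijOn (f' := (Subgraph.deleteVerts · {v})) ⟨?_, ?_⟩ ?_ ?_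
  · exact fun H ⟨_, hTH, hHS⟩ => h.sup_deleteVerts hHS (hTH (.inl rfl))
  · exact fun K ⟨⟨hK, hTK, hKS⟩, hne⟩ =>
      h.deleteVerts_sup hKS (h.subgraph_adj hK hKS (hTK (.inl rfl)) hne)
  · rintro H ⟨hH, hTH, hHS⟩
    obtain ⟨hw, hTH⟩ := Set.insert_subset_iff.1 hTH
    refine ⟨⟨?_, ?_, ?_⟩, fun heq => ?_⟩
    · exact Subgraph.connected_sup hH.preconnected
        (Subgraph.subgraphOfAdj_connected h.adj).preconnected ⟨w, hw, by simp⟩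
    · exact Set.insert_subset (.inr (.inl rfl)) (hTH.trans Set.subset_union_left)
    · rintro x (hx | rfl | rfl)
      exacts [.inr (hHS hx), .inl rfl, .inr h.mem]
    · have hw' : w ∈ (G.singletonSubgraph v).verts := Set.mem_singleton_iff.1 heq ▸ .inl hw
      exact h.adj.ne' hw'
  · rintro K ⟨⟨hK, hTK, hKS⟩, hne⟩
    obtain ⟨hv, hTK⟩ := Set.insert_subset_iff.1 hTK
    have hvw := h.subgraph_adj hK hKS hv hne
    refine ⟨h.deleteVerts_connected hK hKS hvw, Set.insert_subset ?_ ?_, ?_⟩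
    · exact ⟨hvw.snd_mem, hvw.ne.symm⟩
    · exact fun x hx => ⟨hTK hx, fun e => h.notMem (e ▸ hT hx)⟩
    · exact fun x hx => (hKS hx.1).resolve_left hx.2

theorem ncard_connectedBetween_insert_insert (h : IsPendantAt G S v w) (hT : T ⊆ S)
    (hne : T.Nonempty) :
    (connectedBetween G (insert v T) (insert v S)).ncard =
      (connectedBetween G (insert w T) S).ncard := by
  obtain ⟨t, ht⟩ := hne
  rw [(h.bijOn_sup hT).ncard_eq, Set.sdiff_singleton_eq_self]
  rintro ⟨-, hv, -⟩
  have htv : t = v := hv (.inr ht)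
  exact h.notMem (htv ▸ hT ht)

variable [Finite V]

theorem ncard_connectedBetween_singleton_insert (h : IsPendantAt G S v w) :
    (connectedBetween G {v} (insert v S)).ncard = (connectedBetween G {w} S).ncard + 1 := by
  have hbij := (h.bijOn_sup (Set.empty_subset S)).ncard_eq
  rw [insert_empty_eq, insert_empty_eq] at hbij
  rw [hbij, Set.ncard_sdiff_singleton_add_one (singletonSubgraph_mem_connectedBetween (.inl rfl))
    (Set.toFinite _)]

end IsPendantAt

theorem ncard_connectedBetween_insert [Finite V] (hv : v ∉ S) (T : Set V) :
    (connectedBetween G T (insert v S)).ncard =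
      (connectedBetween G T S).ncard + (connectedBetween G (insert v T) (insert v S)).ncard := by
  rw [← Set.ncard_union_eq _ (Set.toFinite _) (Set.toFinite _)]
  · congr 1
    ext H
    by_cases hvH : v ∈ H.verts
    · have hHS : ¬ H.verts ⊆ S := fun h => hv (h hvH)
      simp [connectedBetween, Set.insert_subset_iff, hvH, hHS]
    · simp [connectedBetween, Set.insert_subset_iff, hvH, Set.subset_insert_iff_of_notMem]
  · exact Set.disjoint_left.2 fun H hH hH' => hv (hH.2.2 (hH'.2.1 (.inl rfl)))

end Pendant

section LeafExtension

variable {V : Type*} {G : SimpleGraph V} {B S : Set V} {u v w : V}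

theorem ncard_connectedBetween_pair_le [Finite V] (u w : V) (S : Set V) :
    (connectedBetween G {w, u} S).ncard ≤ (connectedBetween G {u} S).ncard :=
  Set.ncard_le_ncard (connectedBetween_anti_left (Set.subset_insert w {u}) S) (Set.toFinite _)

theorem ncard_connectedBetween_pair_eq_iff [Finite V] (hu : u ∈ S) :
    (connectedBetween G {w, u} S).ncard = (connectedBetween G {u} S).ncard ↔ u = w := by
  refine ⟨fun heq => ?_, by rintro rfl; rw [Set.pair_eq_singleton]⟩
  have hmem := singletonSubgraph_mem_connectedBetween (G := G) hu
  rw [← Set.eq_of_subset_of_ncard_le (connectedBetween_anti_left (Set.subset_insert w {u}) S)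
    heq.ge (Set.toFinite _)] at hmem
  have hwu : w = u := hmem.2.1 (.inl rfl)
  exact hwu.symm

theorem IsPendantAt.ncard_connectedBetween_singleton_insert_of_mem [Finite V]
    (h : IsPendantAt G S v w) (hu : u ∈ S) :
    (connectedBetween G {u} (insert v S)).ncard =
      (connectedBetween G {u} S).ncard + (connectedBetween G {w, u} S).ncard := by
  rw [ncard_connectedBetween_insert h.notMem, h.ncard_connectedBetween_insert_insert
    (Set.singleton_subset_iff.2 hu) (Set.singleton_nonempty u)]

theorem IsPendantAt.ncard_connectedBetween_empty_insert [Finite V] (h : IsPendantAt G S v w) :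
    (connectedBetween G ∅ (insert v S)).ncard =
      (connectedBetween G ∅ S).ncard + (connectedBetween G {w} S).ncard + 1 := by
  rw [ncard_connectedBetween_insert h.notMem, insert_empty_eq,
    h.ncard_connectedBetween_singleton_insert, add_assoc]

/-- `LeafExtension G B S` says that `S` arises from `B` by successively adding vertices, each of
which has exactly one neighbour among the vertices already present. -/
inductive LeafExtension (G : SimpleGraph V) (B : Set V) : Set V → Prop
  | base : LeafExtension G B B
  | addLeaf {S : Set V} {v w : V} :
      LeafExtension G B S → IsPendantAt G S v w → LeafExtension G B (insert v S)

theorem LeafExtension.subset (h : LeafExtension G B S) : B ⊆ S := by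
  induction h with
  | base => exact subset_rfl
  | addLeaf _ _ ih => exact ih.trans (Set.subset_insert _ _)

theorem LeafExtension.ncard_insert_sdiff [Finite V] (h : LeafExtension G B S) (hv : v ∉ S) :
    (insert v S \ B).ncard = (S \ B).ncard + 1 := by
  rw [Set.insert_sdiff_of_notMem _ fun hvB => hv (h.subset hvB),
    Set.ncard_insert_of_notMem fun hvS => hv hvS.1]

/-- All vertices of `S` outside `B` hang as leaves on one and the same vertex `u` of `B`. -/
def AllPendantAt (G : SimpleGraph V) (B S : Set V) (u : V) : Prop :=
  u ∈ B ∧ ∀ x ∈ S \ B, G.neighborSet x ∩ S = {u}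

theorem allPendantAt_self : AllPendantAt G B B u ↔ u ∈ B := by
  simp [AllPendantAt]

theorem LeafExtension.allPendantAt_insert_iff (h : LeafExtension G B S)
    (hv : IsPendantAt G S v w) :
    AllPendantAt G B (insert v S) u ↔ u = w ∧ AllPendantAt G B S u := by
  have hvB : v ∉ B := fun hvB => hv.notMem (h.subset hvB)
  have hinter (x : V) (hx : ¬ G.Adj x v) : G.neighborSet x ∩ insert v S = G.neighborSet x ∩ S :=
    Set.inter_insert_of_notMem hx
  constructor
  · rintro ⟨huB, hpend⟩
    have huv := hpend v ⟨.inl rfl, hvB⟩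
    rw [hinter v G.irrefl, hv.neighborSet_inter, Set.singleton_eq_singleton_iff] at huv
    refine ⟨huv.symm, huB, fun x ⟨hxS, hxB⟩ => ?_⟩
    have hxu := hpend x ⟨.inr hxS, hxB⟩
    rwa [hinter] at hxu
    intro hxv
    have hvu : v = u := hxu.le ⟨hxv, .inl rfl⟩
    exact hvB (hvu ▸ huB)
  · rintro ⟨rfl, huB, hpend⟩
    refine ⟨huB, ?_⟩
    rintro x ⟨rfl | hxS, hxB⟩
    · rw [hinter x G.irrefl, hv.neighborSet_inter]
    · rw [hinter, hpend x ⟨hxS, hxB⟩]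
      intro hxv
      exact hxB ((hv.adj_iff hxS).1 hxv.symm ▸ huB)

theorem AllPendantAt.leafExtension [Finite V] (h : AllPendantAt G B S u) (hBS : B ⊆ S) :
    LeafExtension G B S := by
  suffices hind : LeafExtension G B (S \ B ∪ B) by rwa [Set.sdiff_union_of_subset hBS] at hind
  refine Set.Finite.induction_on_subset (motive := fun A _ => LeafExtension G B (A ∪ B)) _
    (Set.toFinite (S \ B)) (by rw [Set.empty_union]; exact .base) ?_
  intro x A hx hA hxA ih
  rw [Set.insert_union]
  refine ih.addLeaf (w := u) ⟨fun hxAB => hxAB.elim hxA hx.2, ?_⟩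
  have hABS : A ∪ B ⊆ S := Set.union_subset (hA.trans Set.sdiff_subset) hBS
  rw [← Set.inter_eq_right.2 hABS, ← Set.inter_assoc, h.2 x hx,
    Set.inter_eq_left, Set.singleton_subset_iff]
  exact .inr h.1

variable [Finite V] {c : ℕ}

theorem LeafExtension.ncard_connectedBetween_singleton (h : LeafExtension G B S) (hc : 2 ≤ c)
    (hB : ∀ u ∈ B, (connectedBetween G {u} B).ncard = c) (hu : u ∈ S) :
    (connectedBetween G {u} S).ncard ≤ 2 ^ (S \ B).ncard * c ∧
      ((connectedBetween G {u} S).ncard = 2 ^ (S \ B).ncard * c ↔ AllPendantAt G B S u) := by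
  induction h generalizing u with
  | base => simp [allPendantAt_self, hB u hu, hu]
  | @addLeaf S v w hS hv ih =>
    rw [hS.allPendantAt_insert_iff hv, hS.ncard_insert_sdiff hv.notMem, pow_succ', mul_assoc]
    rcases hu with rfl | hu
    · have hpos : 1 ≤ 2 ^ (S \ B).ncard := Nat.one_le_two_pow
      have hlt : (connectedBetween G {w} S).ncard + 1 < 2 * (2 ^ (S \ B).ncard * c) := by
        nlinarith [(ih hv.mem).1]
      rw [hv.ncard_connectedBetween_singleton_insert]
      exact ⟨hlt.le, fun heq => absurd heq hlt.ne, fun ⟨huw, _⟩ => absurd (huw ▸ hv.mem) hv.notMem⟩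
    · rw [hv.ncard_connectedBetween_singleton_insert_of_mem hu, ← (ih hu).2,
        ← ncard_connectedBetween_pair_eq_iff (G := G) (w := w) hu]
      have hle := (ih hu).1
      have hpair := ncard_connectedBetween_pair_le (G := G) u w S
      omega

theorem LeafExtension.ncard_connectedBetween_empty (h : LeafExtension G B S) (hc : 2 ≤ c)
    (hB : ∀ u ∈ B, (connectedBetween G {u} B).ncard = c) (hne : B.Nonempty) :
    (connectedBetween G ∅ S).ncard ≤
        (connectedBetween G ∅ B).ncard + (S \ B).ncard + (2 ^ (S \ B).ncard - 1) * c ∧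
      ((connectedBetween G ∅ S).ncard =
          (connectedBetween G ∅ B).ncard + (S \ B).ncard + (2 ^ (S \ B).ncard - 1) * c ↔
        ∃ u, AllPendantAt G B S u) := by
  induction h with
  | base => simpa [allPendantAt_self, Set.Nonempty] using hne
  | @addLeaf S v w hS hv ih =>
    obtain ⟨hle, heq⟩ := hS.ncard_connectedBetween_singleton hc hB hv.mem
    have hsum : 2 ^ (S \ B).ncard * c + (2 ^ (S \ B).ncard - 1) * c =
        (2 ^ ((S \ B).ncard + 1) - 1) * c := by
      have hpos : 1 ≤ 2 ^ (S \ B).ncard := Nat.one_le_two_pow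
      rw [← add_mul, pow_succ]
      congr 1
      omega
    rw [hv.ncard_connectedBetween_empty_insert, hS.ncard_insert_sdiff hv.notMem, ← hsum]
    refine ⟨by omega, ?_⟩
    simp only [hS.allPendantAt_insert_iff hv]
    constructor
    · exact fun h => ⟨w, rfl, heq.1 (by omega)⟩
    · rintro ⟨u, rfl, hu⟩
      have hthrough := heq.2 hu
      have htotal := ih.2.2 ⟨u, hu⟩
      omega

end LeafExtension

section EdgeCounting

variable {V W : Type*} {G : SimpleGraph V} {B S : Set V} {v w : V}

theorem connected_set_induction [Finite V] (hG : G.Connected) {p : Set V → Prop}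
    (huniv : p Set.univ)
    (hstep : ∀ S v w, v ∉ S → w ∈ S → G.Adj v w → p (insert v S) → p S) (hS : S.Nonempty) :
    p S := by
  induction S using WellFoundedGT.induction with
  | ind S ih =>
    by_cases hSuniv : S = Set.univ
    · exact hSuniv ▸ huniv
    obtain ⟨a, ha⟩ := hS
    obtain ⟨b, hb⟩ := (Set.ne_univ_iff_exists_notMem S).1 hSuniv
    obtain ⟨walk⟩ := hG.preconnected a b
    obtain ⟨d, -, hfst, hsnd⟩ := walk.exists_boundary_dart S ha hb
    exact hstep S d.snd d.fst hsnd hfst d.adj.symm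
      (ih _ (Set.ssubset_insert hsnd) (Set.insert_nonempty _ _))

theorem hom_image_edgeSet_subset {H : SimpleGraph W} (f : H →g G) :
    Sym2.map f '' H.edgeSet ⊆ G.edgeSet ∩ (Set.range f).sym2 := by
  rintro _ ⟨⟨a, b⟩, hab, rfl⟩
  exact ⟨f.map_adj hab, ⟨a, rfl⟩, ⟨b, rfl⟩⟩

variable [Finite V]

theorem ncard_edgeSet_inter_sym2_insert (hv : v ∉ S) :
    (G.edgeSet ∩ (insert v S).sym2).ncard =
      (G.edgeSet ∩ S.sym2).ncard + (G.neighborSet v ∩ S).ncard := by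
  have hsplit : G.edgeSet ∩ (insert v S).sym2 =
      (G.edgeSet ∩ S.sym2) ∪ (s(v, ·)) '' (G.neighborSet v ∩ S) := by
    ext ⟨x, y⟩
    simp only [Set.mem_inter_iff, mem_edgeSet, Set.mk_mem_sym2_iff, Set.mem_insert_iff,
      Set.mem_union, Set.mem_image, mem_neighborSet, Sym2.eq_iff]
    constructor
    · rintro ⟨hxy, rfl | hx, rfl | hy⟩
      · exact absurd rfl hxy.ne
      · exact .inr ⟨y, ⟨hxy, hy⟩, .inl ⟨rfl, rfl⟩⟩
      · exact .inr ⟨x, ⟨hxy.symm, hx⟩, .inr ⟨rfl, rfl⟩⟩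
      · exact .inl ⟨hxy, hx, hy⟩
    · rintro (⟨hxy, hx, hy⟩ | ⟨z, ⟨hvz, hz⟩, ⟨rfl, rfl⟩ | ⟨rfl, rfl⟩⟩)
      exacts [⟨hxy, .inr hx, .inr hy⟩, ⟨hvz, .inl rfl, .inr hz⟩, ⟨hvz.symm, .inr hz, .inl rfl⟩]
  have hdisj : Disjoint (G.edgeSet ∩ S.sym2) ((s(v, ·)) '' (G.neighborSet v ∩ S)) := by
    rw [Set.disjoint_right]
    rintro _ ⟨z, -, rfl⟩ ⟨-, hvS, -⟩
    exact hv hvS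
  rw [hsplit, Set.ncard_union_eq hdisj,
    Set.ncard_image_of_injective _ fun _ _ h => Sym2.congr_right.1 h]

theorem ncard_edgeSet_inter_sym2_add_card_le (hG : G.Connected) (hS : S.Nonempty) :
    (G.edgeSet ∩ S.sym2).ncard + Nat.card V ≤ G.edgeSet.ncard + S.ncard := by
  refine connected_set_induction (p := fun S =>
    (G.edgeSet ∩ S.sym2).ncard + Nat.card V ≤ G.edgeSet.ncard + S.ncard) hG (le_of_eq ?_) ?_ hS
  · rw [Set.sym2_univ, Set.inter_univ, Set.ncard_univ]
  intro S v w hv hw hvw ih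
  have hpos : 0 < (G.neighborSet v ∩ S).ncard := (Set.ncard_pos).2 ⟨w, hvw, hw⟩
  rw [ncard_edgeSet_inter_sym2_insert hv, Set.ncard_insert_of_notMem hv] at ih
  omega

theorem leafExtension_univ_of_card_le (hG : G.Connected) (hB : B.Nonempty)
    (hcard : G.edgeSet.ncard + B.ncard ≤ (G.edgeSet ∩ B.sym2).ncard + Nat.card V) :
    LeafExtension G B Set.univ := by
  refine connected_set_induction (p := fun S => LeafExtension G B S →
    G.edgeSet.ncard + S.ncard ≤ (G.edgeSet ∩ S.sym2).ncard + Nat.card V →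
      LeafExtension G B Set.univ) hG (fun h _ => h) ?_ hB .base hcard
  intro S v w hv hw hvw ih hS hcardS
  have hle := ncard_edgeSet_inter_sym2_add_card_le hG (Set.insert_nonempty v S)
  rw [ncard_edgeSet_inter_sym2_insert hv, Set.ncard_insert_of_notMem hv] at hle ih
  have hpos : 0 < (G.neighborSet v ∩ S).ncard := (Set.ncard_pos).2 ⟨w, hvw, hw⟩
  obtain ⟨x, hx⟩ := Set.ncard_eq_one.1 (show (G.neighborSet v ∩ S).ncard = 1 by omega)
  exact ih (hS.addLeaf ⟨hv, hx⟩) (by omega)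

theorem ncard_edgeSet_le_of_injective {H : SimpleGraph W} {f : H →g G}
    (hf : Function.Injective f) :
    H.edgeSet.ncard ≤ (G.edgeSet ∩ (Set.range f).sym2).ncard := by
  rw [← Set.ncard_image_of_injective _ (Sym2.map.injective hf)]
  exact Set.ncard_le_ncard (hom_image_edgeSet_subset f)

theorem hom_adj_iff_of_card_le [Nonempty W] {H : SimpleGraph W} {f : H →g G}
    (hf : Function.Injective f) (hG : G.Connected)
    (hcard : G.edgeSet.ncard + Nat.card W ≤ H.edgeSet.ncard + Nat.card V) {a b : W} :
    G.Adj (f a) (f b) ↔ H.Adj a b := by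
  refine ⟨fun hab => ?_, f.map_adj⟩
  have hle := ncard_edgeSet_inter_sym2_add_card_le hG (Set.range_nonempty f)
  rw [Set.ncard_range_of_injective hf] at hle
  have himage : Sym2.map f '' H.edgeSet = G.edgeSet ∩ (Set.range f).sym2 := by
    refine Set.eq_of_subset_of_ncard_le (hom_image_edgeSet_subset f) ?_
    rw [Set.ncard_image_of_injective _ (Sym2.map.injective hf)]
    omega
  have hmem : s(f a, f b) ∈ Sym2.map f '' H.edgeSet := himage ▸ ⟨hab, ⟨a, rfl⟩, ⟨b, rfl⟩⟩
  rwa [← Sym2.map_mk, (Sym2.map.injective hf).mem_set_image] at hmem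

theorem exists_embedding_leafExtension_of_isContained [Nonempty W] {H : SimpleGraph W}
    (hHG : H ⊑ G) (hG : G.Connected)
    (hcard : G.edgeSet.ncard + Nat.card W ≤ H.edgeSet.ncard + Nat.card V) :
    ∃ φ : H ↪g G, LeafExtension G (Set.range φ) Set.univ := by
  obtain ⟨f, hf⟩ := hHG
  have hle := ncard_edgeSet_le_of_injective hf
  have hext : LeafExtension G (Set.range f) Set.univ := by
    refine leafExtension_univ_of_card_le hG (Set.range_nonempty f) ?_
    rw [Set.ncard_range_of_injective hf]
    omega
  exact ⟨⟨⟨f, hf⟩, hom_adj_iff_of_card_le hf hG hcard⟩, hext⟩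

theorem ncard_edgeSet_cycleGraph {g : ℕ} (hg : 3 ≤ g) : (cycleGraph g).edgeSet.ncard = g := by
  obtain ⟨m, rfl⟩ := Nat.exists_eq_add_of_le' hg
  have hsum := (cycleGraph (m + 3)).sum_degrees_eq_twice_card_edges
  simp only [cycleGraph_degree_three_le, Finset.sum_const, Finset.card_univ, Fintype.card_fin,
    smul_eq_mul] at hsum
  rw [← coe_edgeFinset, Set.ncard_coe_finset]
  omega

theorem not_isAcyclic_of_card_edgeSet_eq (hG : G.Connected)
    (hE : Nat.card G.edgeSet = Nat.card V) : ¬ G.IsAcyclic := fun hac => by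
  have hcard := (isTree_iff_connected_and_card.1 ⟨hG, hac⟩).2
  omega

theorem exists_cycleGraph_embedding_leafExtension (hG : G.Connected)
    (hE : Nat.card G.edgeSet = Nat.card V) :
    ∃ φ : cycleGraph G.girth ↪g G, LeafExtension G (Set.range φ) Set.univ := by
  have hac := not_isAcyclic_of_card_edgeSet_eq hG hE
  have hgirth := three_le_girth hac
  have : Nonempty (Fin G.girth) := ⟨⟨0, by omega⟩⟩
  obtain ⟨a, walk, hwalk, hlength⟩ := exists_girth_eq_length.2 hac
  refine exists_embedding_leafExtension_of_isContained
    ((cycleGraph_isContained_iff hgirth).2 ⟨a, walk, hwalk, hlength.symm⟩) hG ?_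
  rw [ncard_edgeSet_cycleGraph hgirth, Nat.card_fin, ← hE, Nat.card_coe_set_eq, add_comm]

end EdgeCounting

section CycleArcs

variable {m : ℕ}

theorem cycleGraph_adj_iff_eq_add_one {x y : Fin (m + 2)} :
    (cycleGraph (m + 2)).Adj x y ↔ y = x + 1 ∨ x = y + 1 := by
  rw [cycleGraph_adj, sub_eq_iff_eq_add', sub_eq_iff_eq_add', or_comm, add_comm x, add_comm y]

/-- The arc of the cycle `C_{m+3}` with `k` edges running from `i` to `i + k`. Its vertices are
the `x` at distance `x - i ≤ k` ahead of `i`, the subtraction being that of `Fin (m + 3)`. -/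
def arc (i k : Fin (m + 3)) : (cycleGraph (m + 3)).Subgraph where
  verts := {x | x - i ≤ k}
  Adj x y := (y = x + 1 ∧ x - i < k) ∨ (x = y + 1 ∧ y - i < k)
  adj_sub h := cycleGraph_adj_iff_eq_add_one.2 (h.imp And.left And.left)
  edge_vert := by
    rintro x y (⟨-, hx⟩ | ⟨rfl, hy⟩)
    · exact hx.le
    · change y + 1 - i ≤ k
      rw [add_sub_right_comm]
      exact Fin.add_one_le_of_lt hy
  symm := ⟨fun _ _ => Or.symm⟩

theorem mem_arc_verts {i k x : Fin (m + 3)} : x ∈ (arc i k).verts ↔ x - i ≤ k := Iff.rfl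

theorem arc_adj {i k x y : Fin (m + 3)} :
    (arc i k).Adj x y ↔ (y = x + 1 ∧ x - i < k) ∨ (x = y + 1 ∧ y - i < k) := Iff.rfl

theorem arc_connected (i k : Fin (m + 3)) : (arc i k).Connected := by
  have hi : i ∈ (arc i k).verts := by simp [mem_arc_verts]
  refine (subgraph_connected_iff_forall_closed hi).2 fun A hiA hA x hx => ?_
  suffices hmem : ∀ j ≤ k, i + j ∈ A by simpa using hmem (x - i) hx
  intro j
  induction j using Fin.induction with
  | zero => simpa using hiA
  | succ j ih =>
    intro hj
    have hlt : j.castSucc < k := j.castSucc_lt_succ.trans_le hj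
    refine hA _ (ih hlt.le) _ (arc_adj.2 (.inl ⟨?_, by simpa using hlt⟩))
    rw [add_assoc, Fin.coeSucc_eq_succ]

theorem not_arc_adj_sub_one (i k : Fin (m + 3)) : ¬ (arc i k).Adj (i - 1) i := by
  rintro (⟨-, hlt⟩ | ⟨heq, -⟩)
  · rw [sub_sub_cancel_left, Fin.lt_def, Fin.coe_neg_one] at hlt
    omega
  · have htwo : (1 : Fin (m + 3)) + 1 = 0 := by
      rw [← sub_eq_zero.2 heq.symm]
      abel
    exact absurd htwo (ne_of_beq_false rfl)

theorem arc_ne_top (i k : Fin (m + 3)) : arc i k ≠ ⊤ := by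
  intro htop
  refine not_arc_adj_sub_one i k (htop ▸ ?_)
  exact cycleGraph_adj_iff_eq_add_one.2 (.inl (by simp))

theorem sub_one_sub_lt {i x : Fin (m + 3)} (hx : x ≠ i) : x - 1 - i < x - i := by
  rw [sub_right_comm]
  exact Fin.sub_one_lt_iff.2 (Fin.pos_iff_ne_zero.2 (sub_ne_zero.2 hx))

theorem eq_of_not_arc_adj_sub_one {i k x : Fin (m + 3)} (hx : x ∈ (arc i k).verts)
    (hadj : ¬ (arc i k).Adj (x - 1) x) : x = i := by
  by_contra hne
  exact hadj (.inl ⟨by simp, (sub_one_sub_lt hne).trans_le hx⟩)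

theorem arc_inj {i i' k k' : Fin (m + 3)} : arc i k = arc i' k' ↔ i = i' ∧ k = k' := by
  refine ⟨fun h => ?_, by rintro ⟨rfl, rfl⟩; rfl⟩
  have hi : i ∈ (arc i k).verts := by simp [mem_arc_verts]
  obtain rfl : i = i' := eq_of_not_arc_adj_sub_one (h ▸ hi) (h ▸ not_arc_adj_sub_one i k)
  have hle (l : Fin (m + 3)) : l ≤ k ↔ l ≤ k' := by
    simpa [mem_arc_verts] using congrArg (i + l ∈ Subgraph.verts ·) h
  exact ⟨rfl, le_antisymm ((hle k).1 le_rfl) ((hle k').2 le_rfl)⟩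

theorem exists_not_adj_sub_one {H : (cycleGraph (m + 3)).Subgraph} (hne : H.verts.Nonempty)
    (hH : H ≠ ⊤) : ∃ i ∈ H.verts, ¬ H.Adj (i - 1) i := by
  by_contra! hadj
  obtain ⟨a, ha⟩ := hne
  have hmem (j : Fin (m + 3)) : a - j ∈ H.verts := by
    induction j using Fin.induction with
    | zero => simpa using ha
    | succ j ih =>
      rw [← Fin.coeSucc_eq_succ, ← sub_sub]
      exact (hadj _ ih).fst_mem
  have hverts (x : Fin (m + 3)) : x ∈ H.verts := by simpa using hmem (a - x)
  refine hH (top_le_iff.1 ⟨fun x _ => hverts x, fun x y hxy => ?_⟩)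
  rcases cycleGraph_adj_iff_eq_add_one.1 hxy with rfl | rfl
  · simpa using hadj _ (hverts (x + 1))
  · simpa using (hadj _ (hverts (y + 1))).symm

theorem exists_eq_arc {H : (cycleGraph (m + 3)).Subgraph} (hH : H.Connected) (htop : H ≠ ⊤) :
    ∃ i k, H = arc i k := by
  obtain ⟨i, hi, hpred⟩ := exists_not_adj_sub_one hH.nonempty htop
  obtain ⟨k, hk⟩ := exists_minimal_of_wellFoundedLT (fun k => ¬ H.Adj (i + k) (i + k + 1))
    ⟨-1, by simpa [sub_eq_add_neg] using hpred⟩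
  have hadj {x : Fin (m + 3)} (hx : x - i < k) : H.Adj x (x + 1) := by
    simpa using hk.not_prop_of_lt hx
  have hle : arc i k ≤ H := by
    refine ⟨fun x hx => ?_, ?_⟩
    · by_cases hxi : x = i
      · exact hxi ▸ hi
      · simpa using (hadj ((sub_one_sub_lt hxi).trans_le hx)).snd_mem
    · rintro x y (⟨rfl, hx⟩ | ⟨rfl, hy⟩)
      exacts [hadj hx, (hadj hy).symm]
  refine ⟨i, k, (subgraph_eq_of_le_of_forall_adj hH hle (arc_connected i k).nonempty ?_).symm⟩
  intro x hx y hxy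
  rcases cycleGraph_adj_iff_eq_add_one.1 hxy.adj_sub with rfl | rfl
  · refine .inl ⟨rfl, lt_of_le_of_ne hx fun hxk => hk.prop ?_⟩
    simpa [← hxk] using hxy
  · refine .inr ⟨rfl, ?_⟩
    have hyi : y + 1 ≠ i := by
      rintro rfl
      exact hpred (by simpa using hxy.symm)
    simpa using (sub_one_sub_lt hyi).trans_le hx

theorem subgraph_cycleGraph_connected_iff {H : (cycleGraph (m + 3)).Subgraph} :
    H.Connected ↔ H = ⊤ ∨ ∃ i k, H = arc i k := by
  constructor
  · exact fun hH => or_iff_not_imp_left.2 (exists_eq_arc hH)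
  · rintro (rfl | ⟨i, k, rfl⟩)
    · exact Subgraph.connected_iff'.2 (Subgraph.topIso.connected_iff.2 cycleGraph_connected)
    · exact arc_connected i k

end CycleArcs

section CycleCounting

variable {V : Type*} {G : SimpleGraph V} {g : ℕ}

theorem coreIndex_cycleGraph (hg : 3 ≤ g) : coreIndex (cycleGraph g) = g ^ 2 + 1 := by
  obtain ⟨m, rfl⟩ := Nat.exists_eq_add_of_le' hg
  have hsplit : connectedBetween (cycleGraph (m + 3)) ∅ Set.univ =
      insert ⊤ (Set.range fun p : Fin (m + 3) × Fin (m + 3) => arc p.1 p.2) := by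
    ext H
    simp [connectedBetween, subgraph_cycleGraph_connected_iff, eq_comm]
  rw [coreIndex_eq_ncard_connectedBetween, hsplit, Set.ncard_insert_of_notMem,
    Set.ncard_range_of_injective, Nat.card_prod, Nat.card_fin, sq]
  · exact fun p q h => Prod.ext_iff.2 (arc_inj.1 h)
  · rintro ⟨p, hp⟩
    exact arc_ne_top _ _ hp

theorem ncard_connectedBetween_singleton_cycleGraph (hg : 3 ≤ g) (x : Fin g) :
    (connectedBetween (cycleGraph g) {x} Set.univ).ncard = (g + 1).choose 2 + 1 := by
  obtain ⟨m, rfl⟩ := Nat.exists_eq_add_of_le' hg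
  have hsplit : connectedBetween (cycleGraph (m + 3)) {x} Set.univ =
      insert ⊤ (Set.range fun p : {p : Fin (m + 3) × Fin (m + 3) // p.1 ≤ p.2} =>
        arc (x - p.1.1) p.1.2) := by
    ext H
    simp only [connectedBetween, subgraph_cycleGraph_connected_iff, Set.singleton_subset_iff,
      Set.subset_univ, and_true, Set.mem_ofPred_eq, Set.mem_insert_iff, Set.mem_range]
    constructor
    · rintro ⟨rfl | ⟨i, k, rfl⟩, hx⟩
      · exact .inl rfl
      · exact .inr ⟨⟨(x - i, k), hx⟩, by simp⟩
    · rintro (rfl | ⟨⟨⟨j, k⟩, hjk⟩, rfl⟩)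
      · exact ⟨.inl rfl, trivial⟩
      · exact ⟨.inr ⟨_, _, rfl⟩, by simpa [mem_arc_verts] using hjk⟩
  rw [hsplit, Set.ncard_insert_of_notMem, Set.ncard_range_of_injective,
    ← Nat.card_congr Sym2.sortEquiv, Nat.card_eq_fintype_card, Sym2.card, Fintype.card_fin]
  · rintro ⟨p, hp⟩ ⟨q, hq⟩ h
    obtain ⟨hfst, hsnd⟩ := arc_inj.1 h
    exact Subtype.ext (Prod.ext (sub_right_injective hfst) hsnd)
  · rintro ⟨p, hp⟩
    exact arc_ne_top _ _ hp

theorem ncard_connectedBetween_empty_range (hg : 3 ≤ g) (φ : cycleGraph g ↪g G) :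
    (connectedBetween G ∅ (Set.range φ)).ncard = g ^ 2 + 1 := by
  rw [← coreIndex_cycleGraph hg, coreIndex_eq_ncard_connectedBetween,
    ← ncard_connectedBetween_image φ, Set.image_empty, Set.image_univ]

theorem ncard_connectedBetween_singleton_range (hg : 3 ≤ g) (φ : cycleGraph g ↪g G) {u : V}
    (hu : u ∈ Set.range φ) :
    (connectedBetween G {u} (Set.range φ)).ncard = (g + 1).choose 2 + 1 := by
  obtain ⟨x, rfl⟩ := hu
  rw [← ncard_connectedBetween_singleton_cycleGraph hg x, ← ncard_connectedBetween_image φ,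
    Set.image_singleton, Set.image_univ]

end CycleCounting

section Pineapple

variable {V : Type*} {G : SimpleGraph V} {n g : ℕ}

theorem pineapple_adj_inl_inl {a b : Fin g} :
    (pineapple n g).Adj (.inl a) (.inl b) ↔ (cycleGraph g).Adj a b := by
  simpa [pineapple, adj_comm _ b a] using Adj.ne

theorem pineapple_adj_inl_inr {a : Fin g} {i : Fin (n - g)} :
    (pineapple n g).Adj (.inl a) (.inr i) ↔ (a : ℕ) = 0 := by
  simp [pineapple]

theorem not_pineapple_adj_inr_inr {i j : Fin (n - g)} :
    ¬ (pineapple n g).Adj (.inr i) (.inr j) := by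
  simp [pineapple]

/-- The inclusion of the cycle into the pineapple graph. -/
def pineappleCycle (n g : ℕ) : cycleGraph g ↪g pineapple n g where
  toFun := .inl
  inj' := Sum.inl_injective
  map_rel_iff' := pineapple_adj_inl_inl

theorem allPendantAt_pineapple [NeZero g] :
    AllPendantAt (pineapple n g) (Set.range (pineappleCycle n g)) Set.univ (.inl 0) := by
  refine ⟨⟨0, rfl⟩, ?_⟩
  rintro (a | i) ⟨-, ha⟩
  · exact absurd ⟨a, rfl⟩ ha
  · ext (b | j)
    · simp [adj_comm _ (Sum.inr i), pineapple_adj_inl_inr]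
    · simp [not_pineapple_adj_inr_inr]

theorem exists_cycleGraph_embedding_apply_zero {m : ℕ} (φ : cycleGraph (m + 3) ↪g G) {u : V}
    (hu : u ∈ Set.range φ) :
    ∃ ψ : cycleGraph (m + 3) ↪g G, ψ 0 = u ∧ Set.range ψ = Set.range φ := by
  obtain ⟨c, rfl⟩ := hu
  let rotation : cycleGraph (m + 3) ≃g cycleGraph (m + 3) :=
    ⟨Equiv.addRight c, by simp [cycleGraph_eq_circulantGraph]⟩
  refine ⟨φ.comp rotation.toEmbedding, by simp [rotation], ?_⟩
  exact rotation.surjective.range_comp φ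

theorem AllPendantAt.adj_iff {B S : Set V} {u x y : V} (h : AllPendantAt G B S u) (hx : x ∈ S)
    (hxB : x ∉ B) (hy : y ∈ S) : G.Adj x y ↔ y = u := by
  simpa [hy] using Set.ext_iff.1 (h.2 x ⟨hx, hxB⟩) y

variable [Finite V]

theorem nonempty_iso_pineapple_of_allPendantAt (hg : 3 ≤ g) (φ : cycleGraph g ↪g G) {u : V}
    (hu : AllPendantAt G (Set.range φ) Set.univ u) :
    Nonempty (G ≃g pineapple (Nat.card V) g) := by
  classical
  obtain ⟨m, rfl⟩ := Nat.exists_eq_add_of_le' hg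
  obtain ⟨ψ, rfl, hrange⟩ := exists_cycleGraph_embedding_apply_zero φ hu.1
  rw [← hrange] at hu
  have hcard : Nat.card ((Set.range ψ)ᶜ : Set V) = Nat.card V - (m + 3) := by
    rw [Nat.card_coe_set_eq, Set.ncard_compl, Set.ncard_range_of_injective ψ.injective,
      Nat.card_fin]
  let e := Finite.equivFinOfCardEq hcard
  let f : Fin (m + 3) ⊕ Fin (Nat.card V - (m + 3)) ≃ V :=
    ((Equiv.ofInjective ψ ψ.injective).sumCongr e.symm).trans (Equiv.Set.sumCompl _)
  have hinr (i : Fin (Nat.card V - (m + 3))) (y : V) : G.Adj (f (.inr i)) y ↔ y = ψ 0 :=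
    hu.adj_iff (Set.mem_univ _) (e.symm i).2 (Set.mem_univ _)
  have hinl (a : Fin (m + 3)) : f (.inl a) = ψ 0 ↔ (a : ℕ) = 0 :=
    ψ.injective.eq_iff.trans Fin.ext_iff
  refine ⟨RelIso.symm ⟨f, ?_⟩⟩
  rintro (a | i) (b | j)
  · rw [pineapple_adj_inl_inl]
    exact ψ.map_adj_iff
  · rw [pineapple_adj_inl_inr, adj_comm, hinr, hinl]
  · rw [adj_comm (pineapple _ _), pineapple_adj_inl_inr, hinr, hinl]
  · rw [hinr]
    exact iff_of_false (fun h => (e.symm j).2 ⟨0, h.symm⟩) not_pineapple_adj_inr_inr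

theorem coreIndex_of_cycleGraph_leafExtension (hg : 3 ≤ g) (φ : cycleGraph g ↪g G)
    (h : LeafExtension G (Set.range φ) Set.univ) :
    coreIndex G ≤ g ^ 2 + 1 + (Nat.card V - g) +
        (2 ^ (Nat.card V - g) - 1) * ((g + 1).choose 2 + 1) ∧
      (coreIndex G = g ^ 2 + 1 + (Nat.card V - g) +
          (2 ^ (Nat.card V - g) - 1) * ((g + 1).choose 2 + 1) ↔
        ∃ u, AllPendantAt G (Set.range φ) Set.univ u) := by
  have hc : 2 ≤ (g + 1).choose 2 + 1 := Nat.succ_le_succ (Nat.choose_pos (by omega))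
  have hcard : (Set.univ \ Set.range φ).ncard = Nat.card V - g := by
    rw [← Set.compl_eq_univ_sdiff, Set.ncard_compl, Set.ncard_range_of_injective φ.injective,
      Nat.card_fin]
  have hmain := h.ncard_connectedBetween_empty hc
    (fun u hu => ncard_connectedBetween_singleton_range hg φ hu) ⟨φ ⟨0, by omega⟩, _, rfl⟩
  rwa [ncard_connectedBetween_empty_range hg, hcard, ← coreIndex_eq_ncard_connectedBetween]
    at hmain

theorem coreIndex_pineapple (hg : 3 ≤ g) :
    coreIndex (pineapple n g) =
      g ^ 2 + 1 + (n - g) + (2 ^ (n - g) - 1) * ((g + 1).choose 2 + 1) := by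
  have : NeZero g := ⟨by omega⟩
  have hpend := allPendantAt_pineapple (n := n) (g := g)
  have hmain := (coreIndex_of_cycleGraph_leafExtension hg (pineappleCycle n g)
    (hpend.leafExtension (Set.subset_univ _))).2.2 ⟨_, hpend⟩
  simpa using hmain

theorem coreIndex_le_coreIndex_pineapple (hG : G.Connected) (hE : Nat.card G.edgeSet = Nat.card V) :
    coreIndex G ≤ coreIndex (pineapple (Nat.card V) G.girth) := by
  have hg := three_le_girth (not_isAcyclic_of_card_edgeSet_eq hG hE)
  obtain ⟨φ, hφ⟩ := exists_cycleGraph_embedding_leafExtension hG hE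
  rw [coreIndex_pineapple hg]
  exact (coreIndex_of_cycleGraph_leafExtension hg φ hφ).1

theorem coreIndex_eq_coreIndex_pineapple_iff (hG : G.Connected)
    (hE : Nat.card G.edgeSet = Nat.card V) :
    coreIndex G = coreIndex (pineapple (Nat.card V) G.girth) ↔
      Nonempty (G ≃g pineapple (Nat.card V) G.girth) := by
  have hg := three_le_girth (not_isAcyclic_of_card_edgeSet_eq hG hE)
  obtain ⟨φ, hφ⟩ := exists_cycleGraph_embedding_leafExtension hG hE
  refine ⟨fun heq => ?_, fun ⟨f⟩ => coreIndex_congr f⟩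
  rw [coreIndex_pineapple hg, (coreIndex_of_cycleGraph_leafExtension hg φ hφ).2] at heq
  obtain ⟨u, hu⟩ := heq
  exact nonempty_iso_pineapple_of_allPendantAt hg φ hu

end Pineapple

theorem choose_two_succ_add_one {g : ℕ} (hg : 1 ≤ g) :
    (g + 1).choose 2 + 1 = 2 * g + (g - 1).choose 2 := by
  obtain ⟨h, rfl⟩ := Nat.exists_eq_add_of_le' hg
  simp only [Nat.choose_succ_succ' _ 1, Nat.choose_one_right, Nat.add_sub_cancel]
  ring

/-- For `3 ≤ g < n`, among all unicyclic graphs on `n` vertices with girth `g`, the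
pineapple graph `U^p_{n,g}` uniquely maximizes the core index, and
`F(U^p_{n,g}) = n + g² - g + 1 + (2^(n-g) - 1)(2g + C(g-1,2))`. -/
theorem pineapple_maximizes_coreIndex (n g : ℕ) (hg : 3 ≤ g) (hgn : g < n) :
    (∀ {V : Type} [Fintype V] (G : SimpleGraph V), Fintype.card V = n →
      G.Connected → Nat.card G.edgeSet = n → G.girth = g →
      (coreIndex G ≤ coreIndex (pineapple n g) ∧
        (coreIndex G = coreIndex (pineapple n g) ↔ Nonempty (G ≃g pineapple n g)))) ∧
    coreIndex (pineapple n g) =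
      n + g ^ 2 - g + 1 + (2 ^ (n - g) - 1) * (2 * g + (g - 1).choose 2) := by
  refine ⟨?_, ?_⟩
  · rintro V _ G hV hG hE rfl
    rw [← Nat.card_eq_fintype_card] at hV
    subst hV
    exact ⟨coreIndex_le_coreIndex_pineapple hG hE, coreIndex_eq_coreIndex_pineapple_iff hG hE⟩
  · rw [coreIndex_pineapple hg, choose_two_succ_add_one (by omega)]
    have hsq : g ≤ g ^ 2 := Nat.le_self_pow two_ne_zero g
    omega
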